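/- arXiv:2404.02355 — 2 statements merged into one kernel-verified Lean document; each statement's English description precedes it below -/
import Mathlib

section
/- Let X be a complex Hilbert space and let A and B be closed linear relations in X forming a dual pair (A ⊆ B*) such that (A*)_s(f) = B_s(f) for all f ∈ D(B), (B*)_s(f) = A_s(f) for all f ∈ D(A), B*(0) ∩ N(A*) = {0}, and A*(0) ∩ N(B*) = {0}. Then n(A*,B) = n(B*,A), i.e., dim(D(A*)/D(B)) = dim(D(B*)/D(A)). -/
/-!
Give `X × X` its Hilbert product inner product. A pair `(f,g)` is orthogonal to `B` exactly when
`(g,-f) ∈ B*`, so the orthogonal complement of `B` in `A*` is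
`A* ⊖ B = {(f,g) ∈ A* : (g,-f) ∈ B*}` (`defectRel A B`), and likewise for `B* ⊖ A`. The rotation
`(f,g) ↦ (g,-f)` therefore maps `A* ⊖ B` isomorphically onto `B* ⊖ A` (`defectRelEquiv`).

It remains to see that `(f,g) ↦ f` induces an isomorphism `A* ⊖ B ≃ D(A*)/D(B)`
(`quotDim_eq_rank_defectRel`); the other side follows by exchanging `A` and `B`. It is onto
because `B` is closed. If `(f,g) ∈ A* ⊖ B` and `f ∈ D(B)`, put `s = B_s f = (A*)_s f`. Then
`(f,s) ∈ B` is orthogonal to `(f,g)`, and `g - s ∈ A*(0)` is orthogonal to `s`, so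
`‖f‖² + ‖s‖² = 0`. Hence `f = 0` and `g ∈ A*(0) ∩ N(B*) = {0}`.
-/

local notation "⟪" x ", " y "⟫" => @inner ℂ _ _ x y

noncomputable section

variable {X : Type*} [NormedAddCommGroup X] [InnerProductSpace ℂ X]

/-- The adjoint `T*` of a linear relation `T ⊆ X × X`:
`T* = {(f,g) : ⟪g,x⟫ = ⟪f,y⟫ for all (x,y) ∈ T}`. -/
def adjRel (T : Submodule ℂ (X × X)) : Submodule ℂ (X × X) where
  carrier := {p | ∀ q ∈ T, ⟪p.2, q.1⟫ = ⟪p.1, q.2⟫}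
  add_mem' := by
    intro p p' hp hp' q hq
    simp only [Prod.fst_add, Prod.snd_add, inner_add_left, hp q hq, hp' q hq]
  zero_mem' := by intro q hq; simp
  smul_mem' := by
    intro c p hp q hq
    simp only [Prod.smul_fst, Prod.smul_snd, inner_smul_left, hp q hq]

/-- The domain `D(T)` of a linear relation. -/
def relDom (T : Submodule ℂ (X × X)) : Submodule ℂ X := T.map (LinearMap.fst ℂ X X)

/-- The multivalued part `T(0) = {y : (0,y) ∈ T}` of a linear relation. -/
def relMul (T : Submodule ℂ (X × X)) : Submodule ℂ X := T.comap (LinearMap.inr ℂ X X)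

/-- The null space `N(T) = {x : (x,0) ∈ T}` of a linear relation. -/
def relKer (T : Submodule ℂ (X × X)) : Submodule ℂ X := T.comap (LinearMap.inl ℂ X X)

/-- The operator part `T_s` of a (closed) linear relation, sending `f ∈ D(T)` to the unique
element of `T(f)` orthogonal to `T(0)` (junk value `0` outside `D(T)`). -/
def opPart (T : Submodule ℂ (X × X)) (f : X) : X :=
  @dite X (∃ y, (f, y) ∈ T ∧ y ∈ (relMul T)ᗮ) (Classical.dec _)
    (fun h => h.choose) (fun _ => 0)

/-- The composition `S ∘ T = {(x,z) : ∃ y, (x,y) ∈ T and (y,z) ∈ S}` of linear relations. -/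
def relComp (S T : Submodule ℂ (X × X)) : Submodule ℂ (X × X) where
  carrier := {p | ∃ y, (p.1, y) ∈ T ∧ (y, p.2) ∈ S}
  add_mem' := by
    rintro p p' ⟨y, h1, h2⟩ ⟨y', h1', h2'⟩
    exact ⟨y + y', T.add_mem h1 h1', S.add_mem h2 h2'⟩
  zero_mem' := ⟨0, T.zero_mem, S.zero_mem⟩
  smul_mem' := by
    rintro c p ⟨y, h1, h2⟩
    exact ⟨c • y, T.smul_mem c h1, S.smul_mem c h2⟩

/-- `N(1 + R) = {x : (x, -x) ∈ R}` for a linear relation `R`. -/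
def relKerOnePlus (R : Submodule ℂ (X × X)) : Submodule ℂ X :=
  R.comap ((LinearMap.id : X →ₗ[ℂ] X).prod (-LinearMap.id))

/-- The dimension of the quotient `U / V` (for submodules `V ⊆ U`). -/
def quotDim (U V : Submodule ℂ X) : Cardinal :=
  Module.rank ℂ (↥U ⧸ V.comap U.subtype)

/-- The relation `S = [[0, A], [B, 0]]` in `X² × X²` associated with a dual pair `{A, B}`:
`S = {((x₁,x₂),(y₁,y₂)) : (x₁,y₂) ∈ B and (x₂,y₁) ∈ A}`. -/
def dualS (A B : Submodule ℂ (X × X)) : Submodule ℂ ((X × X) × (X × X)) where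
  carrier := {p | (p.1.1, p.2.2) ∈ B ∧ (p.1.2, p.2.1) ∈ A}
  add_mem' := by
    rintro p p' ⟨h1, h2⟩ ⟨h1', h2'⟩
    exact ⟨B.add_mem h1 h1', A.add_mem h2 h2'⟩
  zero_mem' := ⟨B.zero_mem, A.zero_mem⟩
  smul_mem' := by
    rintro c p ⟨h1, h2⟩
    exact ⟨B.smul_mem c h1, A.smul_mem c h2⟩

/-- The adjoint of a linear relation in `X × X`, where `X × X` carries the product
inner product `⟪(x₁,x₂),(u₁,u₂)⟫ = ⟪x₁,u₁⟫ + ⟪x₂,u₂⟫`. -/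
def adjRel2 (S : Submodule ℂ ((X × X) × (X × X))) : Submodule ℂ ((X × X) × (X × X)) where
  carrier := {p | ∀ q ∈ S,
    ⟪p.2.1, q.1.1⟫ + ⟪p.2.2, q.1.2⟫ = ⟪p.1.1, q.2.1⟫ + ⟪p.1.2, q.2.2⟫}
  add_mem' := by
    intro p p' hp hp' q hq
    simp only [Prod.fst_add, Prod.snd_add, inner_add_left]
    rw [show ∀ a b c d : ℂ, a + b + (c + d) = a + c + (b + d) by intros; ring,
      hp q hq, hp' q hq]; ring
  zero_mem' := by intro q hq; simp
  smul_mem' := by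
    intro c p hp q hq
    simp only [Prod.smul_fst, Prod.smul_snd, inner_smul_left, ← mul_add, hp q hq]

/-- For a relation `R` on `X × X` and `c : ℂ`, the subspace `{f : (f, c • f) ∈ R}`;
for `R = S*` and `c = ∓i` this is the deficiency space `N(S* ± i)`. -/
def eigenSp (R : Submodule ℂ ((X × X) × (X × X))) (c : ℂ) : Submodule ℂ (X × X) :=
  R.comap ((LinearMap.id : (X × X) →ₗ[ℂ] (X × X)).prod (c • LinearMap.id))


/-- The relation `{(f,g) ∈ A* : (g,-f) ∈ B*}`. For a dual pair this is the orthogonal complement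
of `B` in `A*` with respect to the Hilbert product inner product on `X × X`, since
`(f,g) ⊥ B` says exactly that `(g,-f) ∈ B*`. -/
def defectRel (A B : Submodule ℂ (X × X)) : Submodule ℂ (X × X) :=
  adjRel A ⊓ (adjRel B).comap ((LinearMap.snd ℂ X X).prod (-LinearMap.fst ℂ X X))

lemma mem_defectRel {A B : Submodule ℂ (X × X)} {p : X × X} :
    p ∈ defectRel A B ↔ p ∈ adjRel A ∧ (p.2, -p.1) ∈ adjRel B := Iff.rfl

lemma adjRel_symm {A B : Submodule ℂ (X × X)} (h : A ≤ adjRel B) : B ≤ adjRel A := by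
  intro p hp q hq
  have := congrArg (starRingEnd ℂ) (h hq p hp)
  simpa only [inner_conj_symm] using this.symm

lemma relMul_adjRel (A : Submodule ℂ (X × X)) : relMul (adjRel A) = (relDom A)ᗮ := by
  ext y
  rw [Submodule.mem_orthogonal']
  constructor
  · rintro hy _ ⟨q, hq, rfl⟩
    simpa using hy q hq
  · intro hy q hq
    simpa using hy q.1 ⟨q, hq, rfl⟩

lemma opPart_spec [CompleteSpace X] {T : Submodule ℂ (X × X)}
    (hT : IsClosed (relMul T : Set X)) {f : X} (hf : f ∈ relDom T) :
    (f, opPart T f) ∈ T ∧ opPart T f ∈ (relMul T)ᗮ := by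
  have h : ∃ y, (f, y) ∈ T ∧ y ∈ (relMul T)ᗮ := by
    obtain ⟨⟨f', y⟩, hy, rfl⟩ := hf
    have : CompleteSpace (relMul T) := hT.completeSpace_coe
    obtain ⟨m, hm, z, hz, rfl⟩ := (relMul T).exists_add_mem_mem_orthogonal y
    refine ⟨z, ?_, hz⟩
    have : ((0 : X), m) ∈ T := hm
    simpa using T.sub_mem hy this
  unfold opPart
  rw [dif_pos h]
  exact h.choose_spec

/-- Orthogonal decomposition of `X × X` along a closed relation `B`: the component orthogonal
to `B` is a pair `(u,v)` with `(v,-u) ∈ B*`. The Hilbert structure is that of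
`WithLp 2 (X × X)`, because `X × X` itself carries the sup norm. -/
lemma exists_add_mem_adjRel [CompleteSpace X] {B : Submodule ℂ (X × X)}
    (hB : IsClosed (B : Set (X × X))) (p : X × X) :
    ∃ b ∈ B, ∃ r : X × X, (r.2, -r.1) ∈ adjRel B ∧ p = b + r := by
  let K : Submodule ℂ (WithLp 2 (X × X)) :=
    B.comap (WithLp.linearEquiv 2 ℂ (X × X)).toLinearMap
  have hK : IsClosed (K : Set (WithLp 2 (X × X))) :=
    hB.preimage (WithLp.prod_continuous_ofLp 2 X X)
  have : CompleteSpace K := hK.completeSpace_coe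
  obtain ⟨b, hb, r, hr, h⟩ := K.exists_add_mem_mem_orthogonal (WithLp.toLp 2 p)
  refine ⟨b.ofLp, hb, r.ofLp, ?_, ?_⟩
  · intro q hq
    have h1 := (Submodule.mem_orthogonal' K r).1 hr (WithLp.toLp 2 q) hq
    rw [WithLp.prod_inner_apply] at h1
    simp only [inner_neg_left]
    linear_combination -h1
  · have := congrArg WithLp.ofLp h
    simpa using this

/-- The first-coordinate projection induces an isomorphism from the complement of `B` in `A*`
onto `D(A*)/D(B)`. Surjectivity is the orthogonal decomposition along `B`; injectivity is where
the agreement of the operator parts and `A*(0) ∩ N(B*) = {0}` enter. -/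
lemma quotDim_eq_rank_defectRel [CompleteSpace X] {A B : Submodule ℂ (X × X)}
    (hB : IsClosed (B : Set (X × X))) (hBA : B ≤ adjRel A)
    (hop : ∀ f ∈ relDom B, opPart (adjRel A) f = opPart B f)
    (hmul : relMul (adjRel A) ⊓ relKer (adjRel B) = ⊥) :
    quotDim (relDom (adjRel A)) (relDom B) = Module.rank ℂ (defectRel A B) := by
  let φ : defectRel A B →ₗ[ℂ] relDom (adjRel A) :=
    ((LinearMap.fst ℂ X X).comp (defectRel A B).subtype).codRestrict _
      (fun p => ⟨p.1, p.2.1, rfl⟩)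
  let ψ := ((relDom B).comap (relDom (adjRel A)).subtype).mkQ.comp φ
  have hinj : Function.Injective ψ := by
    rw [injective_iff_map_eq_zero]
    rintro ⟨⟨f, g⟩, hp⟩ h0
    have hfB : f ∈ relDom B :=
      (Submodule.Quotient.mk_eq_zero ((relDom B).comap (relDom (adjRel A)).subtype)).1 h0
    obtain ⟨hpA, hpB⟩ := mem_defectRel.1 hp
    have hBs := (opPart_spec (hB.preimage (by fun_prop : Continuous fun y : X => ((0 : X), y)))
      hfB).1
    have hAs := (opPart_spec (T := adjRel A) (f := f)
      (by rw [relMul_adjRel]; exact Submodule.isClosed_orthogonal _) ⟨_, hpA, rfl⟩).2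
    rw [hop f hfB] at hAs
    set s := opPart B f
    have hm : g - s ∈ relMul (adjRel A) := by
      have := (adjRel A).sub_mem hpA (hBA hBs)
      simpa [relMul] using this
    -- `(f, g) ⊥ (f, s)` and `g - s ⊥ s` give `‖s‖² + ‖f‖² = 0`.
    have h2 := hpB _ hBs
    have h3 := (Submodule.mem_orthogonal _ _).1 hAs _ hm
    simp only [inner_neg_left, inner_sub_left] at h2 h3
    have h4 : ⟪f, f⟫ + ⟪s, s⟫ = 0 := by linear_combination -h3 - h2
    have hf : f = 0 := by
      have h5 : ‖f‖ ^ 2 + ‖s‖ ^ 2 = 0 := by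
        rw [← inner_self_eq_norm_sq (𝕜 := ℂ) f, ← inner_self_eq_norm_sq (𝕜 := ℂ) s, ← map_add,
          h4, map_zero]
      have h6 : ‖f‖ ^ 2 = 0 := by nlinarith [sq_nonneg ‖f‖, sq_nonneg ‖s‖]
      simpa using h6
    subst hf
    have hg : g ∈ relMul (adjRel A) ⊓ relKer (adjRel B) := ⟨hpA, by simpa [relKer] using hpB⟩
    rw [hmul, Submodule.mem_bot] at hg
    subst hg
    rfl
  have hsurj : Function.Surjective ψ := by
    intro z
    obtain ⟨⟨f, hf⟩, rfl⟩ := Submodule.mkQ_surjective _ z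
    obtain ⟨p, hp, rfl⟩ := hf
    obtain ⟨b, hb, r, hr, rfl⟩ := exists_add_mem_adjRel hB p
    have hrA : r ∈ adjRel A := by simpa using (adjRel A).sub_mem hp (hBA hb)
    refine ⟨⟨r, hrA, hr⟩, (Submodule.Quotient.eq _).2 ?_⟩
    refine ⟨-b, B.neg_mem hb, ?_⟩
    change -b.1 = r.1 - (b.1 + r.1)
    abel
  exact (LinearEquiv.ofBijective ψ ⟨hinj, hsurj⟩).rank_eq.symm

/-- The rotation `(f,g) ↦ (g,-f)` carries the complement of `B` in `A*` onto the complement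
of `A` in `B*`. -/
def defectRelEquiv (A B : Submodule ℂ (X × X)) : defectRel A B ≃ₗ[ℂ] defectRel B A where
  toFun p := ⟨(p.1.2, -p.1.1), p.2.2, (adjRel A).neg_mem p.2.1⟩
  invFun p := ⟨(-p.1.2, p.1.1), by
    have h : (-p.1.2, - -p.1.1) ∈ adjRel A := (adjRel A).neg_mem p.2.2
    rw [neg_neg] at h
    refine ⟨h, ?_⟩
    · change (p.1.1, - -p.1.2) ∈ adjRel B
      rw [neg_neg]
      exact p.2.1⟩
  map_add' p q := Subtype.ext (Prod.ext rfl (neg_add _ _))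
  map_smul' c p := Subtype.ext (Prod.ext rfl (smul_neg _ _).symm)
  left_inv p := Subtype.ext (Prod.ext (neg_neg _) rfl)
  right_inv p := Subtype.ext (Prod.ext rfl (neg_neg _))

/-- Proposition 2.7. Under the stated hypotheses,
`n(A*,B) = n(B*,A)`, i.e. `dim (D(A*)/D(B)) = dim (D(B*)/D(A))`. -/
theorem n_adjA_B_eq_n_adjB_A [CompleteSpace X] (A B : Submodule ℂ (X × X))
    (hA : IsClosed (A : Set (X × X))) (hB : IsClosed (B : Set (X × X)))
    (hdual : A ≤ adjRel B)
    (hopB : ∀ f ∈ relDom B, opPart (adjRel A) f = opPart B f)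
    (hopA : ∀ f ∈ relDom A, opPart (adjRel B) f = opPart A f)
    (hmul1 : relMul (adjRel B) ⊓ relKer (adjRel A) = ⊥)
    (hmul2 : relMul (adjRel A) ⊓ relKer (adjRel B) = ⊥) :
    quotDim (relDom (adjRel A)) (relDom B) = quotDim (relDom (adjRel B)) (relDom A) := by
  rw [quotDim_eq_rank_defectRel hB (adjRel_symm hdual) hopB hmul2,
    quotDim_eq_rank_defectRel hA hdual hopA hmul1]
  exact (defectRelEquiv A B).rank_eq

end
end

section
/- Let X be a complex Hilbert space, let A and B be closed linear relations in X forming a dual pair (A ⊆ B*), and let Ã be a proper extension of {A,B}, i.e., Ã is a closed linear relation with A ⊆ Ã ⊆ B*. Let S = {((x₁,x₂),(y₁,y₂)) : (x₁,y₂) ∈ B and (x₂,y₁) ∈ A} and T = {((x₁,x₂),(y₁,y₂)) : (x₁,y₂) ∈ (Ã)* and (x₂,y₁) ∈ Ã}, both linear relations in X × X. Then T is a self-adjoint extension of S: S ⊆ T = T* ⊆ S*. -/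
/-!
Write `S = dualS A B` and `T = dualS At (adjRel At)`. Testing membership in `T*` against the
elements `((0,x),(y,0))` with `(x,y) ∈ At` and `((x,0),(0,y))` with
`(x,y) ∈ At*` shows that `T*` is the block relation with entries `At**` and `At*`
(`adjRel2_dualS`). Since `At` is closed, `At** = At` (`adjRel_adjRel`): up to the rotation
`(x,y) ↦ (y,-x)` the adjoint is the orthogonal complement in the Hilbert space `X ⊕ X`. Hence
`T* = T`. The inclusion `S ⊆ T` is `A ⊆ At` together with `B ⊆ At*`, which is `At ⊆ B*` read
backwards (`le_adjRel_comm`), and `T = T* ⊆ S*` follows because taking adjoints reverses inclusions.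
-/

local notation "⟪" x ", " y "⟫" => @inner ℂ _ _ x y

noncomputable section

variable {X : Type*} [NormedAddCommGroup X] [InnerProductSpace ℂ X]

theorem le_adjRel_comm {S T : Submodule ℂ (X × X)} (h : S ≤ adjRel T) : T ≤ adjRel S := by
  intro p hp q hq
  rw [← inner_conj_symm, ← inner_conj_symm p.1, h hq p hp]

theorem adjRel_adjRel [CompleteSpace X] {T : Submodule ℂ (X × X)}
    (hT : IsClosed (T : Set (X × X))) : adjRel (adjRel T) = T := by
  refine le_antisymm ?_ (le_adjRel_comm le_rfl)
  intro p hp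
  -- `X × X` carries the sup norm, so orthogonality is taken in its `L²` copy.
  let e := WithLp.prodContinuousLinearEquiv 2 ℂ X X
  let K : Submodule ℂ (WithLp 2 (X × X)) := T.comap (e : WithLp 2 (X × X) →ₗ[ℂ] X × X)
  have hK : IsClosed (K : Set (WithLp 2 (X × X))) := hT.preimage e.continuous
  have : CompleteSpace K := hK.completeSpace_coe
  have hpK : WithLp.toLp 2 p ∈ Kᗮᗮ := by
    intro w hw
    have hw' : (w.snd, -w.fst) ∈ adjRel T := by
      intro q hq
      have h := (Submodule.mem_orthogonal' K w).1 hw (WithLp.toLp 2 q) hq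
      rw [WithLp.prod_inner_apply] at h
      rw [inner_neg_left]
      exact neg_eq_of_add_eq_zero_right h
    have h := hp _ hw'
    rw [inner_neg_right] at h
    rw [inner_eq_zero_symm, WithLp.prod_inner_apply]
    exact (add_comm _ _).trans (eq_neg_iff_add_eq_zero.1 h)
  rw [Submodule.orthogonal_orthogonal] at hpK
  exact hpK

/-- Adjoints of off-diagonal block relations: `[[0,A],[B,0]]* = [[0,B*],[A*,0]]`. -/
theorem adjRel2_dualS (A B : Submodule ℂ (X × X)) :
    adjRel2 (dualS A B) = dualS (adjRel B) (adjRel A) := by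
  ext p
  constructor
  · intro hp
    refine ⟨fun q hq => ?_, fun q hq => ?_⟩
    · simpa using hp ((0, q.1), (q.2, 0)) ⟨B.zero_mem, hq⟩
    · simpa using hp ((q.1, 0), (0, q.2)) ⟨hq, A.zero_mem⟩
  · rintro ⟨h1, h2⟩ q ⟨hq1, hq2⟩
    have e1 := h1 _ hq2
    have e2 := h2 _ hq1
    dsimp only at e1 e2
    rw [e1, e2, add_comm]

theorem adjRel2_antitone {S T : Submodule ℂ ((X × X) × (X × X))} (h : S ≤ T) :
    adjRel2 T ≤ adjRel2 S :=
  fun _ hp q hq => hp q (h hq)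

/-- proof of Theorem 3.3, eq. (3.4). If `At` is a proper extension of the
dual pair `{A,B}` (`A ⊆ At ⊆ B*`, `At` closed), then `T = [[0,At],[At*,0]]` is a self-adjoint
extension of `S = [[0,A],[B,0]]`: `S ⊆ T = T* ⊆ S*`. -/
theorem dualS_selfadjoint_extension [CompleteSpace X] (A B At : Submodule ℂ (X × X))
    (hA : IsClosed (A : Set (X × X))) (hB : IsClosed (B : Set (X × X)))
    (hdual : A ≤ adjRel B)
    (hAt : IsClosed (At : Set (X × X))) (hAAt : A ≤ At) (hAtB : At ≤ adjRel B) :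
    dualS A B ≤ dualS At (adjRel At) ∧
    adjRel2 (dualS At (adjRel At)) = dualS At (adjRel At) ∧
    dualS At (adjRel At) ≤ adjRel2 (dualS A B) := by
  have hST : dualS A B ≤ dualS At (adjRel At) :=
    fun _ hp => ⟨le_adjRel_comm hAtB hp.1, hAAt hp.2⟩
  have hT : adjRel2 (dualS At (adjRel At)) = dualS At (adjRel At) := by
    rw [adjRel2_dualS, adjRel_adjRel hAt]
  exact ⟨hST, hT, hT.ge.trans (adjRel2_antitone hST)⟩

end
end
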